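/- arXiv:1510.06321 — 2 statements merged into one kernel-verified Lean document; each statement's English description precedes it below -/
import Mathlib

section
/- Hörmander's L^p–L^q Fourier multiplier theorem on ℝⁿ: Let 1 < p ≤ 2 ≤ q < ∞ and let σ : ℝⁿ → ℂ be a measurable function satisfying C := sup_{s>0} s · ( |{ξ ∈ ℝⁿ : |σ(ξ)| ≥ s}| )^{1/p − 1/q} < ∞. Then the Fourier multiplier operator A defined by (Af)^(ξ) = σ(ξ) f̂(ξ) extends to a bounded operator from L^p(ℝⁿ) to L^q(ℝⁿ) with ‖A‖_{L^p → L^q} ≲ C. -/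
open MeasureTheory Set SchwartzMap
open scoped ENNReal FourierTransform

theorem ENNReal.rpow_two_add_le (a b : ℝ≥0∞) :
    (a + b) ^ (2 : ℝ) ≤ 2 * a ^ (2 : ℝ) + 2 * b ^ (2 : ℝ) := by
  have := ENNReal.rpow_add_le_mul_rpow_add_rpow a b (p := 2) (by norm_num)
  rw [← mul_add]
  refine this.trans_eq ?_
  norm_num

theorem lintegral_enorm_sq_le_of_lt_two {α : Type*} [MeasurableSpace α] {μ : Measure α}
    {f : α → ℂ} (hf : AEMeasurable f μ) {p : ℝ} (hp : 0 < p) (hp2 : p < 2) (s : Set α) :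
    (∫⁻ x in s, ‖f x‖ₑ ∂μ) ^ (2 : ℝ) ≤
      (∫⁻ x, ‖f x‖ₑ ^ p ∂μ) * ∫⁻ x in s, ‖f x‖ₑ ^ (2 - p) ∂μ := by
  have h := ENNReal.lintegral_mul_le_Lp_mul_Lq (μ.restrict s) Real.HolderConjugate.two_two
    (f := fun x => ‖f x‖ₑ ^ (p / 2)) (g := fun x => ‖f x‖ₑ ^ ((2 - p) / 2))
    (hf.restrict.enorm.pow_const _) (hf.restrict.enorm.pow_const _)
  have e : ∀ x, ‖f x‖ₑ ^ (p / 2) * ‖f x‖ₑ ^ ((2 - p) / 2) = ‖f x‖ₑ := fun x => by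
    rw [← ENNReal.rpow_add_of_nonneg _ _ (by linarith) (by linarith),
      show p / 2 + (2 - p) / 2 = 1 by ring, ENNReal.rpow_one]
  simp only [Pi.mul_apply, e, ← ENNReal.rpow_mul, div_mul_cancel₀ _ (two_ne_zero' ℝ)] at h
  have h2 := ENNReal.rpow_le_rpow h (zero_le_two (α := ℝ))
  rw [ENNReal.mul_rpow_of_nonneg _ _ zero_le_two, ← ENNReal.rpow_mul, ← ENNReal.rpow_mul,
    one_div, inv_mul_cancel₀ (two_ne_zero' ℝ), ENNReal.rpow_one, ENNReal.rpow_one] at h2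
  exact h2.trans (by gcongr; exact Measure.restrict_le_self)

theorem lintegral_Ioi_mul_setLIntegral_lt {α : Type*} [MeasurableSpace α] {μ : Measure α}
    [SFinite μ] {δ : α → ℝ} (hδ : Measurable δ) (hδ0 : ∀ x, 0 ≤ δ x)
    {g : α → ℝ≥0∞} (hg : Measurable g) {k : ℝ → ℝ≥0∞} (hk : Measurable k) :
    ∫⁻ s in Ioi 0, k s * ∫⁻ x in {x | δ x < s}, g x ∂μ =
      ∫⁻ x, g x * (∫⁻ s in Ioi (δ x), k s) ∂μ := by
  have hS : MeasurableSet {z : ℝ × α | δ z.2 < z.1} :=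
    measurableSet_lt (hδ.comp measurable_snd) measurable_fst
  have hF : Measurable (fun z : ℝ × α => {z : ℝ × α | δ z.2 < z.1}.indicator
      (fun z => k z.1 * g z.2) z) :=
    ((hk.comp measurable_fst).mul (hg.comp measurable_snd)).indicator hS
  calc ∫⁻ s in Ioi 0, k s * ∫⁻ x in {x | δ x < s}, g x ∂μ
      = ∫⁻ s in Ioi (0 : ℝ), (∫⁻ x, {z : ℝ × α | δ z.2 < z.1}.indicator
          (fun z => k z.1 * g z.2) (s, x) ∂μ) := by
        refine lintegral_congr fun s => ?_
        rw [← lintegral_const_mul _ hg, ← lintegral_indicator (measurableSet_lt hδ measurable_const)]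
        rfl
    _ = ∫⁻ x, (∫⁻ s in Ioi (0 : ℝ), {z : ℝ × α | δ z.2 < z.1}.indicator
          (fun z => k z.1 * g z.2) (s, x)) ∂μ := lintegral_lintegral_swap hF.aemeasurable
    _ = _ := by
        refine lintegral_congr fun x => ?_
        rw [← lintegral_const_mul _ hk, ← lintegral_indicator measurableSet_Ioi,
          ← lintegral_indicator measurableSet_Ioi]
        refine lintegral_congr fun s => ?_
        by_cases hs : δ x < s
        · simp [indicator, hs, (hδ0 x).trans_lt hs, mul_comm]
        · simp [indicator, hs]

theorem lintegral_Ioi_ofReal_rpow {a c : ℝ} (ha : a < -1) (hc : 0 < c) :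
    ∫⁻ s in Ioi c, ENNReal.ofReal (s ^ a) = ENNReal.ofReal (-c ^ (a + 1) / (a + 1)) := by
  rw [← integral_Ioi_rpow_of_lt ha hc,
    ofReal_integral_eq_lintegral_ofReal (integrableOn_Ioi_rpow_of_lt ha hc)]
  filter_upwards [self_mem_ae_restrict measurableSet_Ioi] with s hs
  exact Real.rpow_nonneg (hc.trans hs).le _

theorem ae_eq_zero_of_forall_meas_le_norm_eq_zero {α : Type*} [MeasurableSpace α] {μ : Measure α}
    {σ : α → ℂ} (h : ∀ s : ℝ, 0 < s → μ {x | s ≤ ‖σ x‖} = 0) : σ =ᵐ[μ] 0 := by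
  have h' : ∀ᵐ x ∂μ, ∀ k : ℕ, ‖σ x‖ < 1 / ((k : ℝ) + 1) := ae_all_iff.2 fun k => by
    simpa [ae_iff, not_lt] using h (1 / ((k : ℝ) + 1)) (by positivity)
  filter_upwards [h'] with x hx
  by_contra h0
  obtain ⟨k, hk⟩ := exists_nat_one_div_lt (norm_pos_iff.2 h0)
  exact (hx k).not_gt hk

section Fourier

variable {V : Type*} [NormedAddCommGroup V] [InnerProductSpace ℝ V] [FiniteDimensional ℝ V]
  [MeasurableSpace V] [BorelSpace V]

theorem continuous_fourier_of_integrable {f : V → ℂ} (hf : Integrable f) :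
    Continuous (𝓕 f) :=
  VectorFourier.fourierIntegral_continuous Real.continuous_fourierChar
    (by exact continuous_inner) hf

theorem enorm_fourier_le_lintegral (f : V → ℂ) (x : V) : ‖𝓕 f x‖ₑ ≤ ∫⁻ y, ‖f y‖ₑ := by
  rw [Real.fourier_eq]
  refine (enorm_integral_le_lintegral_enorm _).trans_eq ?_
  refine lintegral_congr fun y => ?_
  rw [← ofReal_norm, ← ofReal_norm, Circle.norm_smul]

theorem integral_fourier_mul_eq_of_integrable {f g : V → ℂ} (hf : Integrable f)
    (hg : Integrable g) : ∫ ξ, 𝓕 f ξ * g ξ = ∫ x, f x * 𝓕 g x := by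
  have := VectorFourier.integral_fourierIntegral_smul_eq_flip (L := innerₗ V)
    (μ := volume) (ν := volume)
    Real.continuous_fourierChar (by exact continuous_inner) hf hg
  rw [flip_innerₗ] at this
  exact this

theorem fourier_ae_eq_fourier_toLp {f : V → ℂ} (hf1 : Integrable f) (hf2 : MemLp f 2) :
    𝓕 f =ᵐ[volume] (𝓕 (hf2.toLp f) : Lp ℂ 2 (volume : Measure V)) := by
  refine ae_eq_of_integral_contDiff_smul_eq
    (continuous_fourier_of_integrable hf1).locallyIntegrable
    ((Lp.memLp _).locallyIntegrable (by norm_num)) fun g hg hgc => ?_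
  have hgc' : HasCompactSupport fun x => (g x : ℂ) := hgc.comp_left (g := fun t : ℝ => (t : ℂ)) rfl
  have hg' : ContDiff ℝ (⊤ : ℕ∞) fun x => (g x : ℂ) := Complex.ofRealCLM.contDiff.comp hg
  set G : 𝓢(V, ℂ) := hgc'.toSchwartzMap hg' with hG
  have h := congrArg (fun T : 𝓢'(V, ℂ) => T G)
    (Lp.fourier_toTemperedDistribution_eq (hf2.toLp f))
  simp only [TemperedDistribution.fourier_apply, Lp.toTemperedDistribution_apply] at h
  have h1 : ∫ x, (𝓕 G) x • (hf2.toLp f) x = ∫ x, f x * 𝓕 (⇑G) x := by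
    refine integral_congr_ae ?_
    filter_upwards [hf2.coeFn_toLp] with x hx
    rw [hx, smul_eq_mul, mul_comm, SchwartzMap.fourier_coe]
  rw [h1, ← integral_fourier_mul_eq_of_integrable hf1 G.integrable] at h
  calc ∫ x, g x • 𝓕 f x = ∫ x, 𝓕 f x * G x := by
        refine integral_congr_ae (.of_forall fun x => ?_)
        simp [hG, mul_comm]
    _ = _ := h
    _ = _ := by
        refine integral_congr_ae (.of_forall fun x => ?_)
        simp [hG]

theorem lintegral_enorm_fourier_sq {f : V → ℂ} (hf1 : Integrable f) (hf2 : MemLp f 2) :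
    ∫⁻ ξ, ‖𝓕 f ξ‖ₑ ^ (2 : ℝ) = ∫⁻ x, ‖f x‖ₑ ^ (2 : ℝ) := by
  have h : eLpNorm (𝓕 f) 2 volume = eLpNorm f 2 volume := by
    rw [eLpNorm_congr_ae (fourier_ae_eq_fourier_toLp hf1 hf2)]
    have := congrArg ENNReal.ofReal (Lp.norm_fourier_eq (hf2.toLp f))
    rwa [ofReal_norm, ofReal_norm, Lp.enorm_def, Lp.enorm_def,
      eLpNorm_congr_ae hf2.coeFn_toLp] at this
  have h2 := congrArg (· ^ (2 : ℝ)) h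
  simpa only [eLpNorm_eq_lintegral_rpow_enorm_toReal (p := 2) two_ne_zero ENNReal.ofNat_ne_top,
    ENNReal.toReal_ofNat, ← ENNReal.rpow_mul, one_div, inv_mul_cancel₀ (two_ne_zero' ℝ),
    ENNReal.rpow_one] using h2

theorem setLIntegral_enorm_fourier_sq_le {f : V → ℂ} (hf1 : Integrable f) (hf2 : MemLp f 2)
    {s : Set V} (hs : MeasurableSet s) (t : Set V) :
    ∫⁻ ξ in t, ‖𝓕 f ξ‖ₑ ^ (2 : ℝ) ≤
      2 * (volume t * (∫⁻ x in sᶜ, ‖f x‖ₑ) ^ (2 : ℝ)) + 2 * ∫⁻ x in s, ‖f x‖ₑ ^ (2 : ℝ) := by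
  have hadd : 𝓕 f = 𝓕 (sᶜ.indicator f) + 𝓕 (s.indicator f) := by
    have h := VectorFourier.fourierIntegral_add (L := innerₗ V) (μ := volume)
      Real.continuous_fourierChar (by exact continuous_inner)
      (hf1.indicator hs.compl) (hf1.indicator hs)
    rw [indicator_compl_add_self] at h
    exact h
  have hc : Measurable fun ξ => 2 * ‖𝓕 (sᶜ.indicator f) ξ‖ₑ ^ (2 : ℝ) :=
    ((continuous_fourier_of_integrable (hf1.indicator hs.compl)).measurable.enorm.pow_const
      _).const_mul _
  calc ∫⁻ ξ in t, ‖𝓕 f ξ‖ₑ ^ (2 : ℝ)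
      ≤ ∫⁻ ξ in t, (2 * ‖𝓕 (sᶜ.indicator f) ξ‖ₑ ^ (2 : ℝ) +
          2 * ‖𝓕 (s.indicator f) ξ‖ₑ ^ (2 : ℝ)) := by
        refine lintegral_mono fun ξ => ?_
        rw [hadd]
        exact (ENNReal.rpow_le_rpow (enorm_add_le _ _) zero_le_two).trans
          (ENNReal.rpow_two_add_le _ _)
    _ = 2 * (∫⁻ ξ in t, ‖𝓕 (sᶜ.indicator f) ξ‖ₑ ^ (2 : ℝ)) +
          2 * ∫⁻ ξ in t, ‖𝓕 (s.indicator f) ξ‖ₑ ^ (2 : ℝ) := by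
        rw [lintegral_add_left hc, lintegral_const_mul' _ _ ENNReal.ofNat_ne_top,
          lintegral_const_mul' _ _ ENNReal.ofNat_ne_top]
    _ ≤ _ := by
        refine add_le_add (mul_le_mul_right ?_ _) (mul_le_mul_right ?_ _)
        · calc ∫⁻ ξ in t, ‖𝓕 (sᶜ.indicator f) ξ‖ₑ ^ (2 : ℝ)
              ≤ ∫⁻ ξ in t, (∫⁻ x in sᶜ, ‖f x‖ₑ) ^ (2 : ℝ) := by
                refine lintegral_mono fun ξ => ENNReal.rpow_le_rpow ?_ zero_le_two
                refine (enorm_fourier_le_lintegral _ _).trans_eq ?_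
                rw [← lintegral_indicator hs.compl]
                exact lintegral_congr fun x => enorm_indicator_eq_indicator_enorm _ _
            _ = _ := by rw [setLIntegral_const, mul_comm]
        · refine (setLIntegral_le_lintegral _ _).trans_eq ?_
          rw [lintegral_enorm_fourier_sq (hf1.indicator hs) (hf2.indicator hs),
            ← lintegral_indicator hs]
          refine lintegral_congr fun x => ?_
          by_cases hx : x ∈ s <;> simp [hx]

theorem lintegral_ofReal_sq_mul_enorm_fourier_le {f : V → ℂ} (hf1 : Integrable f)
    (hf2 : MemLp f 2) {w : V → ℝ} (hw : Measurable w) (hw0 : ∀ ξ, 0 ≤ w ξ)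
    {δ : V → ℝ} (hδ : Measurable δ) (hδ0 : ∀ x, 0 ≤ δ x) :
    ∫⁻ ξ, ENNReal.ofReal (w ξ ^ (2 : ℝ)) * ‖𝓕 f ξ‖ₑ ^ (2 : ℝ) ≤
      4 * (∫⁻ s in Ioi (0 : ℝ), ENNReal.ofReal s * (volume {ξ | s ≤ w ξ} *
        (∫⁻ x in {x | δ x < s}, ‖f x‖ₑ) ^ (2 : ℝ))) +
      2 * ∫⁻ x, ENNReal.ofReal (δ x ^ (2 : ℝ)) * ‖f x‖ₑ ^ (2 : ℝ) := by
  have hfm : AEMeasurable (fun x => ‖f x‖ₑ ^ (2 : ℝ)) :=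
    hf1.aestronglyMeasurable.enorm.pow_const _
  have layer : ∀ {u : V → ℝ} (_ : Measurable u) (_ : ∀ x, 0 ≤ u x) {g : V → ℝ≥0∞}
      (_ : AEMeasurable g) (_ : ∀ᵐ x, g x < ⊤),
      ∫⁻ x, ENNReal.ofReal (u x ^ (2 : ℝ)) * g x =
        2 * ∫⁻ s in Ioi (0 : ℝ), ENNReal.ofReal s * ∫⁻ x in {x | s ≤ u x}, g x := by
    intro u hu hu0 g hg hgt
    have h := lintegral_rpow_eq_lintegral_meas_le_mul (volume.withDensity g) (f := u)
      (.of_forall hu0) hu.aemeasurable (zero_lt_two (α := ℝ))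
    rw [lintegral_withDensity_eq_lintegral_mul₀ hg
      (hu.pow_const _).ennreal_ofReal.aemeasurable] at h
    calc _ = _ := lintegral_congr fun x => mul_comm _ _
      _ = _ := h
      _ = _ := by
        rw [ENNReal.ofReal_ofNat]
        congr 1
        refine lintegral_congr fun s => ?_
        rw [withDensity_apply _ (measurableSet_le measurable_const hu), mul_comm]
        norm_num
  have hFc := continuous_fourier_of_integrable hf1
  rw [layer hw hw0 (hFc.measurable.enorm.pow_const _).aemeasurable
    (.of_forall fun x => ENNReal.rpow_lt_top_of_nonneg zero_le_two enorm_ne_top),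
    layer hδ hδ0 hfm
      (.of_forall fun x => ENNReal.rpow_lt_top_of_nonneg zero_le_two enorm_ne_top)]
  have hm : Measurable fun s : ℝ => ∫⁻ x in {x | s ≤ δ x}, ‖f x‖ₑ ^ (2 : ℝ) :=
    Antitone.measurable fun s t hst =>
      lintegral_mono_set fun x (hx : t ≤ δ x) => hst.trans hx
  calc 2 * ∫⁻ s in Ioi (0 : ℝ), ENNReal.ofReal s * ∫⁻ ξ in {ξ | s ≤ w ξ}, ‖𝓕 f ξ‖ₑ ^ (2 : ℝ)
      ≤ 2 * ∫⁻ s in Ioi (0 : ℝ), (2 * (ENNReal.ofReal s * (volume {ξ | s ≤ w ξ} *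
          (∫⁻ x in {x | δ x < s}, ‖f x‖ₑ) ^ (2 : ℝ))) +
          2 * (ENNReal.ofReal s * ∫⁻ x in {x | s ≤ δ x}, ‖f x‖ₑ ^ (2 : ℝ))) := by
        refine mul_le_mul_right (lintegral_mono fun s => ?_) _
        refine (mul_le_mul_right (setLIntegral_enorm_fourier_sq_le hf1 hf2
          (measurableSet_le measurable_const hδ : MeasurableSet {x | s ≤ δ x}) _) _).trans_eq ?_
        have : {x | s ≤ δ x}ᶜ = {x | δ x < s} := by ext; simp
        rw [this]
        ring
    _ = _ := by
        have hm' : Measurable fun s : ℝ =>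
            2 * (ENNReal.ofReal s * ∫⁻ x in {x | s ≤ δ x}, ‖f x‖ₑ ^ (2 : ℝ)) :=
          (ENNReal.measurable_ofReal.mul hm).const_mul _
        rw [lintegral_add_right _ hm',
          lintegral_const_mul' _ _ ENNReal.ofNat_ne_top,
          lintegral_const_mul' _ _ ENNReal.ofNat_ne_top]
        ring

/-- The Hardy-Littlewood-Paley inequality, with a weight in weak `L^r`, `1/r = 1/p - 1/2`. -/
theorem lintegral_weight_mul_enorm_fourier_sq_le {p r : ℝ} (hp : 1 < p) (hp2 : p < 2)
    (hr : r * (2 - p) = 2 * p) {f : V → ℂ} (hfm : Measurable f) (hf1 : Integrable f)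
    (hf2 : MemLp f 2) {w : V → ℝ} (hw : Measurable w) (hw0 : ∀ ξ, 0 ≤ w ξ) {D : ℝ} (hD : 0 < D)
    (hwD : ∀ s, 0 < s → volume {ξ | s ≤ w ξ} ≤ ENNReal.ofReal ((D / s) ^ r))
    {N : ℝ} (hN : 0 < N) (hfN : ∫⁻ x, ‖f x‖ₑ ^ p = ENNReal.ofReal N) :
    ∫⁻ ξ, ENNReal.ofReal (w ξ ^ (2 : ℝ)) * ‖𝓕 f ξ‖ₑ ^ (2 : ℝ) ≤
      ENNReal.ofReal ((4 / (r - 2) + 2) * (D ^ 2 * N ^ (2 / p))) := by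
  have hr2 : 2 < r := by nlinarith
  set B : ℝ := D * N ^ (1 / r) with hB
  have hB0 : 0 < B := by positivity
  set δ : V → ℝ := fun x => B * ‖f x‖ ^ ((p - 2) / 2) with hδdef
  have hδ : Measurable δ := (hfm.norm.pow_const _).const_mul _
  have hδ0 : ∀ x, 0 ≤ δ x := fun x => by positivity
  have hen : ∀ x (a : ℝ), 0 ≤ a → ‖f x‖ₑ ^ a = ENNReal.ofReal (‖f x‖ ^ a) := fun x a ha => by
    rw [← ofReal_norm, ENNReal.ofReal_rpow_of_nonneg (norm_nonneg _) ha]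
  have hBN : D ^ r * N * B ^ (2 - r) = B ^ 2 := by
    have h1 : B ^ r = D ^ r * N := by
      rw [hB, Real.mul_rpow hD.le (by positivity), ← Real.rpow_mul hN.le, one_div,
        inv_mul_cancel₀ (by linarith), Real.rpow_one]
    rw [← h1, ← Real.rpow_add hB0, add_sub_cancel, Real.rpow_two]
  have hBN2 : B ^ 2 * N = D ^ 2 * N ^ (2 / p) := by
    rw [hB, mul_pow, mul_assoc, ← Real.rpow_natCast (N ^ (1 / r)), ← Real.rpow_mul hN.le]
    nth_rewrite 2 [← Real.rpow_one N]
    rw [← Real.rpow_add hN]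
    congr 2
    have : r ≠ 0 := by linarith
    field_simp
    push_cast
    linarith
  have hlow : ∫⁻ x, ENNReal.ofReal (δ x ^ (2 : ℝ)) * ‖f x‖ₑ ^ (2 : ℝ) ≤
      ENNReal.ofReal (B ^ 2 * N) := by
    rw [ENNReal.ofReal_mul (by positivity), ← hfN,
      ← lintegral_const_mul' _ _ ENNReal.ofReal_ne_top]
    refine lintegral_mono fun x => ?_
    rw [hen x 2 zero_le_two, hen x p (by linarith), ← ENNReal.ofReal_mul (by positivity),
      ← ENNReal.ofReal_mul (by positivity)]
    refine ENNReal.ofReal_le_ofReal ?_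
    rcases (norm_nonneg (f x)).eq_or_lt with h0 | h0
    · rw [← h0, Real.zero_rpow (two_ne_zero), mul_zero]
      positivity
    · refine le_of_eq ?_
      rw [hδdef, Real.mul_rpow hB0.le (by positivity), ← Real.rpow_mul h0.le, mul_assoc,
        ← Real.rpow_add h0, Real.rpow_two]
      congr 2
      ring
  have hhigh : ∫⁻ s in Ioi (0 : ℝ), ENNReal.ofReal s * (volume {ξ | s ≤ w ξ} *
        (∫⁻ x in {x | δ x < s}, ‖f x‖ₑ) ^ (2 : ℝ)) ≤
      ENNReal.ofReal (B ^ 2 * N / (r - 2)) := by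
    calc ∫⁻ s in Ioi (0 : ℝ), ENNReal.ofReal s * (volume {ξ | s ≤ w ξ} *
          (∫⁻ x in {x | δ x < s}, ‖f x‖ₑ) ^ (2 : ℝ))
        ≤ ∫⁻ s in Ioi (0 : ℝ), ENNReal.ofReal (D ^ r * N) * (ENNReal.ofReal (s ^ (1 - r)) *
            ∫⁻ x in {x | δ x < s}, ‖f x‖ₑ ^ (2 - p)) := by
          refine setLIntegral_mono' measurableSet_Ioi fun s (hs : 0 < s) => ?_
          calc _ ≤ ENNReal.ofReal s * (ENNReal.ofReal ((D / s) ^ r) * (ENNReal.ofReal N *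
                ∫⁻ x in {x | δ x < s}, ‖f x‖ₑ ^ (2 - p))) := by
                refine mul_le_mul_right (mul_le_mul' (hwD s hs) ?_) _
                rw [← hfN]
                exact lintegral_enorm_sq_le_of_lt_two hfm.aemeasurable (by linarith) hp2 _
            _ = _ := by
                rw [← mul_assoc, ← mul_assoc, ← mul_assoc, ← ENNReal.ofReal_mul hs.le,
                  ← ENNReal.ofReal_mul (by positivity), ← ENNReal.ofReal_mul (by positivity)]
                congr 2
                rw [Real.div_rpow hD.le hs.le, Real.rpow_sub hs, Real.rpow_one]
                ring
      _ = ENNReal.ofReal (D ^ r * N) * ∫⁻ x, ‖f x‖ₑ ^ (2 - p) *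
            ∫⁻ s in Ioi (δ x), ENNReal.ofReal (s ^ (1 - r)) := by
          rw [lintegral_const_mul' _ _ ENNReal.ofReal_ne_top,
            lintegral_Ioi_mul_setLIntegral_lt hδ hδ0 (hfm.enorm.pow_const _)
              (k := fun s => ENNReal.ofReal (s ^ (1 - r))) (by fun_prop)]
      _ ≤ ENNReal.ofReal (D ^ r * N) * ∫⁻ x, ENNReal.ofReal (B ^ (2 - r) / (r - 2)) *
            ‖f x‖ₑ ^ p := by
          refine mul_le_mul_right (lintegral_mono fun x => ?_) _
          rcases (norm_nonneg (f x)).eq_or_lt with h0 | h0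
          · rw [hen x _ (by linarith), ← h0, Real.zero_rpow (by linarith)]
            simp
          · have hδx : 0 < δ x := by positivity
            rw [lintegral_Ioi_ofReal_rpow (by linarith) hδx, hen x _ (by linarith),
              hen x _ (by linarith), ← ENNReal.ofReal_mul (by positivity),
              ← ENNReal.ofReal_mul (by have : 0 < r - 2 := by linarith
                                       positivity)]
            refine ENNReal.ofReal_le_ofReal (le_of_eq ?_)
            rw [hδdef, Real.mul_rpow hB0.le (by positivity), ← Real.rpow_mul h0.le,
              show 1 - r + 1 = 2 - r by ring,
              show (p - 2) / 2 * (2 - r) = p - (2 - p) by linarith, Real.rpow_sub h0 p]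
            have h2 : ‖f x‖ ^ (2 - p) ≠ 0 := by positivity
            generalize ‖f x‖ ^ (2 - p) = a at h2
            generalize ‖f x‖ ^ p = b
            generalize B ^ (2 - r) = c
            have h3 : r - 2 ≠ 0 := by linarith
            have h4 : 2 - r ≠ 0 := by linarith
            field_simp
            ring
      _ = _ := by
          rw [lintegral_const_mul' _ _ ENNReal.ofReal_ne_top, hfN,
            ← ENNReal.ofReal_mul (by have : 0 < r - 2 := by linarith
                                     positivity),
            ← ENNReal.ofReal_mul (by positivity), ← hBN]
          congr 1
          ring
  refine (lintegral_ofReal_sq_mul_enorm_fourier_le hf1 hf2 hw hw0 hδ hδ0).trans ?_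
  have hr0 : 0 < r - 2 := by linarith
  refine (add_le_add (mul_le_mul_right hhigh _) (mul_le_mul_right hlow _)).trans_eq ?_
  rw [← ENNReal.ofReal_ofNat 4, ← ENNReal.ofReal_ofNat 2, ← ENNReal.ofReal_mul (by norm_num),
    ← ENNReal.ofReal_mul (by norm_num), ← ENNReal.ofReal_add (by positivity) (by positivity),
    ← hBN2]
  congr 1
  ring

theorem exists_lintegral_rpow_mul_enorm_fourier_le {p : ℝ} (hp : 1 < p) (hp2 : p ≤ 2) :
    ∃ K : ℝ≥0∞, K ≠ ⊤ ∧ ∀ {a θ C : ℝ}, 0 ≤ a → 0 < θ → a * θ = 1 / p - 1 / 2 → 0 < C →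
      ∀ {σ : V → ℂ}, Measurable σ →
      (∀ s : ℝ, 0 < s → ENNReal.ofReal s * volume {ξ | s ≤ ‖σ ξ‖} ^ θ ≤ ENNReal.ofReal C) →
      ∀ {f : V → ℂ}, Measurable f → Integrable f → MemLp f 2 →
      (∫⁻ ξ, (‖σ ξ‖ₑ ^ a * ‖𝓕 f ξ‖ₑ) ^ (2 : ℝ)) ^ (1 / 2 : ℝ) ≤
        K * ENNReal.ofReal C ^ a * (∫⁻ x, ‖f x‖ₑ ^ p) ^ (1 / p) := by
  rcases hp2.eq_or_lt with rfl | hp2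
  · refine ⟨1, ENNReal.one_ne_top, fun {a θ C} _ hθ haθ _ σ _ _ f _ hf1 hf2 => ?_⟩
    have ha : a = 0 := by simpa [hθ.ne'] using haθ
    simp only [ha, ENNReal.rpow_zero, one_mul]
    rw [lintegral_enorm_fourier_sq hf1 hf2]
  have hp0 : 0 < p := by linarith
  set r : ℝ := 2 * p / (2 - p) with hrdef
  have hr : r * (2 - p) = 2 * p := div_mul_cancel₀ _ (by linarith)
  have hr2 : 0 < r - 2 := by nlinarith
  refine ⟨ENNReal.ofReal (4 / (r - 2) + 2) ^ (1 / 2 : ℝ), by finiteness, ?_⟩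
  intro a θ C ha0 hθ haθ hC σ hσ hσC f hfm hf1 hf2
  have hpinv : 1 / p - 1 / 2 = 1 / r := by
    rw [hrdef, one_div_div]
    field_simp
  have ha : 0 < a := by
    refine ha0.lt_of_ne' fun h => ?_
    rw [h, zero_mul, hpinv] at haθ
    have : 0 < 1 / r := one_div_pos.2 (by linarith)
    linarith
  rcases eq_or_ne (∫⁻ x, ‖f x‖ₑ ^ p) 0 with hI0 | hI0
  · rw [lintegral_eq_zero_iff (hfm.enorm.pow_const _)] at hI0
    have hf0 : f =ᵐ[volume] 0 := by
      filter_upwards [hI0] with x hx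
      simpa [ENNReal.rpow_eq_zero_iff, hp0, hp0.le, hp0.not_gt] using hx
    have hF : ∀ ξ, 𝓕 f ξ = 0 := fun ξ => by
      rw [Real.fourier_congr_ae hf0, Real.fourier_eq]
      simp
    simp [hF]
  have hK : ENNReal.ofReal (4 / (r - 2) + 2) ≠ 0 := by
    rw [Ne, ENNReal.ofReal_eq_zero, not_le]
    positivity
  rcases eq_or_ne (∫⁻ x, ‖f x‖ₑ ^ p) ⊤ with hI | hI
  · rw [hI, ENNReal.top_rpow_of_pos (by positivity), ENNReal.mul_top]
    · exact le_top
    · refine mul_ne_zero ?_ ?_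
      · simp [ENNReal.rpow_eq_zero_iff, hK]
      · simp [ENNReal.rpow_eq_zero_iff, hC, ha.not_gt]
  have hw : Measurable fun ξ => ‖σ ξ‖ ^ a := hσ.norm.pow_const _
  have hwD : ∀ s, 0 < s → volume {ξ | s ≤ ‖σ ξ‖ ^ a} ≤ ENNReal.ofReal ((C ^ a / s) ^ r) := by
    intro s hs
    have hset : {ξ | s ≤ ‖σ ξ‖ ^ a} = {ξ | s ^ a⁻¹ ≤ ‖σ ξ‖} := by
      ext ξ
      exact (Real.rpow_inv_le_iff_of_pos hs.le (norm_nonneg _) ha).symm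
    have hs' : 0 < s ^ a⁻¹ := by positivity
    have h := hσC _ hs'
    rw [← hset, mul_comm, ← ENNReal.le_div_iff_mul_le (by simp [hs']) (by simp),
      ← ENNReal.ofReal_div_of_pos hs', ← ENNReal.le_rpow_inv_iff hθ,
      ENNReal.ofReal_rpow_of_nonneg (by positivity) (by positivity)] at h
    refine h.trans_eq (congrArg _ ?_)
    have hr' : r = a⁻¹ * θ⁻¹ := by
      rw [← mul_inv, haθ, hpinv, one_div, inv_inv]
    rw [hr', Real.rpow_mul (by positivity), Real.div_rpow (by positivity) hs.le,
      ← Real.rpow_mul hC.le, mul_inv_cancel₀ ha.ne', Real.rpow_one]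
  have h := lintegral_weight_mul_enorm_fourier_sq_le hp hp2 hr hfm hf1 hf2 hw
    (fun _ => by positivity) (by positivity) hwD (ENNReal.toReal_pos hI0 hI)
    (ENNReal.ofReal_toReal hI).symm
  have e : ∀ ξ, ENNReal.ofReal ((‖σ ξ‖ ^ a) ^ (2 : ℝ)) * ‖𝓕 f ξ‖ₑ ^ (2 : ℝ) =
      (‖σ ξ‖ₑ ^ a * ‖𝓕 f ξ‖ₑ) ^ (2 : ℝ) := fun ξ => by
    rw [ENNReal.mul_rpow_of_nonneg _ _ zero_le_two, ← ofReal_norm (σ ξ),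
      ENNReal.ofReal_rpow_of_nonneg (norm_nonneg _) ha0,
      ENNReal.ofReal_rpow_of_nonneg (by positivity) zero_le_two]
  simp only [e] at h
  refine (ENNReal.rpow_le_rpow h (by norm_num)).trans_eq ?_
  rw [ENNReal.ofReal_mul (by positivity), ENNReal.mul_rpow_of_nonneg _ _ (by norm_num),
    ENNReal.ofReal_mul (by positivity), ENNReal.mul_rpow_of_nonneg _ _ (by norm_num), mul_assoc]
  congr 2
  · rw [ENNReal.ofReal_rpow_of_nonneg (by positivity) (by norm_num),
      ENNReal.ofReal_rpow_of_nonneg hC.le ha0, ← Real.sqrt_eq_rpow, Real.sqrt_sq (by positivity)]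
  · rw [← ENNReal.ofReal_rpow_of_nonneg ENNReal.toReal_nonneg (by positivity),
      ENNReal.ofReal_toReal hI, ← ENNReal.rpow_mul]
    congr 1
    field_simp

theorem lintegral_enorm_fourier_rpow_le_of_forall {q q' : ℝ} (hq : 2 ≤ q)
    (hqq : q'.HolderConjugate q) {g : V → ℂ} (hg : Integrable g) {M : ℝ≥0∞}
    (H : ∀ φ : V → ℂ, Measurable φ → Integrable φ → MemLp φ 2 →
      ∫⁻ ξ, ‖g ξ‖ₑ * ‖𝓕 φ ξ‖ₑ ≤ M * (∫⁻ x, ‖φ x‖ₑ ^ q') ^ (1 / q')) :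
    (∫⁻ x, ‖𝓕 g x‖ₑ ^ q) ^ (1 / q) ≤ M := by
  set h := 𝓕 g with hh
  have hc : Continuous h := continuous_fourier_of_integrable hg
  have hq0 : 0 < q := by linarith
  obtain ⟨A, hA⟩ : ∃ A, ∀ x, ‖h x‖ ≤ A :=
    ⟨∫ y, ‖g y‖, fun x => VectorFourier.norm_fourierIntegral_le_integral_norm _ _ _ _ _⟩
  rw [one_div, ENNReal.rpow_inv_le_iff hq0]
  refine lintegral_le_of_forall_fin_meas_le _
    fun s hs hsμ => ?_
  set φ : V → ℂ := s.indicator fun x => (starRingEnd ℂ) (h x) * ((‖h x‖ ^ (q - 2) : ℝ) : ℂ)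
    with hφ
  have hn : ∀ x, ‖(starRingEnd ℂ) (h x) * ((‖h x‖ ^ (q - 2) : ℝ) : ℂ)‖ = ‖h x‖ ^ (q - 1) := by
    intro x
    rw [norm_mul, RCLike.norm_conj, Complex.norm_real, Real.norm_of_nonneg (by positivity)]
    nth_rewrite 1 [← Real.rpow_one ‖h x‖]
    rw [← Real.rpow_add_of_nonneg (norm_nonneg _) zero_le_one (by linarith)]
    congr 1
    ring
  have hm : Measurable fun x => (starRingEnd ℂ) (h x) * ((‖h x‖ ^ (q - 2) : ℝ) : ℂ) :=
    (Complex.continuous_conj.comp hc).measurable.mul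
      (Complex.measurable_ofReal.comp (hc.measurable.norm.pow_const _))
  have hφL : ∀ t : ℝ≥0∞, MemLp φ t := fun t => by
    rw [hφ, memLp_indicator_iff_restrict hs]
    have : IsFiniteMeasure (volume.restrict s) := ⟨by simpa using hsμ.lt_top⟩
    refine MemLp.of_bound hm.aestronglyMeasurable (A ^ (q - 1)) (.of_forall fun x => ?_)
    rw [hn]
    exact Real.rpow_le_rpow (norm_nonneg _) (hA x) (by linarith)
  have hφ1 : Integrable φ := memLp_one_iff_integrable.1 (hφL 1)
  have hJq' : ∫⁻ x, ‖φ x‖ₑ ^ q' = ∫⁻ x in s, ‖h x‖ₑ ^ q := by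
    rw [← lintegral_indicator hs]
    refine lintegral_congr fun x => ?_
    by_cases hx : x ∈ s
    · rw [hφ, indicator_of_mem hx, indicator_of_mem hx, ← ofReal_norm, ← ofReal_norm, hn,
        ENNReal.ofReal_rpow_of_nonneg (by positivity) hqq.nonneg,
        ENNReal.ofReal_rpow_of_nonneg (by positivity) hq0.le, ← Real.rpow_mul (norm_nonneg _),
        hqq.symm.sub_one_mul_conj]
    · simp [hφ, hx, hqq.pos]
  have hprod : ∀ x, h x * φ x = ((s.indicator (fun x => ‖h x‖ ^ q) x : ℝ) : ℂ) := fun x => by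
    by_cases hx : x ∈ s
    · rw [hφ, indicator_of_mem hx, indicator_of_mem hx, ← mul_assoc, Complex.mul_conj,
        Complex.normSq_eq_norm_sq, ← Complex.ofReal_mul, ← Real.rpow_two,
        ← Real.rpow_add_of_nonneg (norm_nonneg _) zero_le_two (by linarith), add_sub_cancel]
    · simp [hφ, hx]
  have hJ : ∫⁻ x in s, ‖h x‖ₑ ^ q = ‖∫ x, h x * φ x‖ₑ := by
    simp only [hprod]
    rw [integral_complex_ofReal, ← ofReal_norm, Complex.norm_real,
      Real.norm_of_nonneg (integral_nonneg fun x => indicator_nonneg (fun _ _ => by positivity) _),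
      integral_indicator hs, ofReal_integral_eq_lintegral_ofReal]
    · refine lintegral_congr fun x => ?_
      rw [← ofReal_norm, ENNReal.ofReal_rpow_of_nonneg (norm_nonneg _) hq0.le]
    · have : IsFiniteMeasure (volume.restrict s) := ⟨by simpa using hsμ.lt_top⟩
      refine Integrable.of_bound (hc.measurable.norm.pow_const _).aestronglyMeasurable (A ^ q)
        (.of_forall fun x => ?_)
      rw [Real.norm_of_nonneg (by positivity)]
      exact Real.rpow_le_rpow (norm_nonneg _) (hA x) hq0.le
    · exact .of_forall fun x => by positivity
  have hJtop : ∫⁻ x in s, ‖h x‖ₑ ^ q ≠ ⊤ := hJ ▸ enorm_ne_top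
  have key : ∫⁻ x in s, ‖h x‖ₑ ^ q ≤ M * (∫⁻ x in s, ‖h x‖ₑ ^ q) ^ (1 / q') := by
    calc ∫⁻ x in s, ‖h x‖ₑ ^ q = ‖∫ ξ, g ξ * 𝓕 φ ξ‖ₑ := by
          rw [hJ, hh, integral_fourier_mul_eq_of_integrable hg hφ1]
      _ ≤ ∫⁻ ξ, ‖g ξ‖ₑ * ‖𝓕 φ ξ‖ₑ := by
          refine (enorm_integral_le_lintegral_enorm _).trans_eq ?_
          exact lintegral_congr fun ξ => enorm_mul _ _
      _ ≤ _ := H φ (hm.indicator hs) hφ1 (hφL 2)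
      _ = _ := by rw [hJq']
  rw [← ENNReal.rpow_inv_le_iff hq0]
  generalize ∫⁻ x in s, ‖h x‖ₑ ^ q = J at key hJtop
  rcases eq_or_ne J 0 with rfl | hJ0
  · simp [hq0]
  · have hpos : J ^ (1 / q') ≠ 0 := by simp [ENNReal.rpow_eq_zero_iff, hJ0, hJtop]
    have hfin : J ^ (1 / q') ≠ ⊤ := ENNReal.rpow_ne_top_of_nonneg hqq.one_div_nonneg hJtop
    refine (ENNReal.mul_le_mul_iff_left hpos hfin).1 ?_
    rwa [← ENNReal.rpow_add _ _ hJ0 hJtop, one_div q', add_comm, hqq.inv_add_inv_eq_one,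
      ENNReal.rpow_one, ← one_div]

theorem eLpNorm_fourierInv_eq (g : V → ℂ) (hg : Integrable g) (q : ℝ≥0∞) :
    eLpNorm (𝓕⁻ g) q volume = eLpNorm (𝓕 g) q volume := by
  rw [show 𝓕⁻ g = 𝓕 g ∘ Neg.neg from funext fun x => Real.fourierInv_eq_fourier_neg g x]
  exact eLpNorm_comp_measurePreserving
    (continuous_fourier_of_integrable hg).aestronglyMeasurable (Measure.measurePreserving_neg _)

theorem fourierInv_eq_zero_of_not_integrable {g : V → ℂ} (hg : ¬ Integrable g) : 𝓕⁻ g = 0 := by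
  ext x
  rw [Real.fourierInv_eq_fourier_neg, Real.fourier_eq]
  exact integral_undef fun h => hg ((Real.fourierIntegral_convergent_iff _).1 h)

theorem fourierInv_eq_zero_of_ae_eq_zero {g : V → ℂ} (hg : g =ᵐ[volume] 0) : 𝓕⁻ g = 0 := by
  ext x
  rw [Real.fourierInv_eq_fourier_neg, Real.fourier_congr_ae hg, Real.fourier_eq]
  simp

end Fourier

/-- Hörmander's `L^p`-`L^q` Fourier multiplier theorem on `ℝⁿ`:
for `1 < p ≤ 2 ≤ q < ∞` there is a constant `K` (depending only on `p, q, n`) such that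
for every measurable symbol `σ` the Fourier multiplier `A`, defined on Schwartz
functions by `(A f)^ = σ · f̂`, satisfies
`‖A f‖_{L^q} ≤ K · sup_{s>0} s |{ξ : |σ ξ| ≥ s}|^{1/p-1/q} · ‖f‖_{L^p}`
(here `q < ∞` since `q` is a real number). -/
theorem stmt_7 (n : ℕ) (p q : ℝ) (hp : 1 < p) (hp2 : p ≤ 2) (h2q : 2 ≤ q) :
    ∃ K : ℝ≥0∞, 0 < K ∧ K ≠ ⊤ ∧
      ∀ σ : EuclideanSpace ℝ (Fin n) → ℂ, Measurable σ →
        ∀ f : 𝓢(EuclideanSpace ℝ (Fin n), ℂ),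
          eLpNorm (𝓕⁻ fun ξ => σ ξ * 𝓕 (⇑f) ξ) (ENNReal.ofReal q) volume ≤
            K * (⨆ s ∈ Ioi (0:ℝ), ENNReal.ofReal s *
                  (volume {ξ : EuclideanSpace ℝ (Fin n) | s ≤ ‖σ ξ‖}) ^ (1/p - 1/q)) *
              eLpNorm (⇑f) (ENNReal.ofReal p) volume := by
  have hp0 : 0 < p := by linarith
  have hq0 : 0 < q := by linarith
  have hqp : q.HolderConjugate q.conjExponent := Real.HolderConjugate.conjExponent (by linarith)
  set q' : ℝ := q.conjExponent with hq'
  have hq'1 : 1 < q' := hqp.symm.lt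
  have hinv : 1 / q' = 1 - 1 / q := by
    have := hqp.inv_add_inv_eq_one
    rw [one_div, one_div]
    linarith
  have hq'2 : q' ≤ 2 := by
    have h1 : 1 / q ≤ 1 / 2 := one_div_le_one_div_of_le two_pos h2q
    refine (one_div_le_one_div two_pos hqp.symm.pos).1 ?_
    linarith
  obtain ⟨K₁, hK₁, H₁⟩ := exists_lintegral_rpow_mul_enorm_fourier_le
    (V := EuclideanSpace ℝ (Fin n)) hp hp2
  obtain ⟨K₂, hK₂, H₂⟩ := exists_lintegral_rpow_mul_enorm_fourier_le
    (V := EuclideanSpace ℝ (Fin n)) hq'1 hq'2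
  refine ⟨K₁ * K₂ + 1, by positivity, by finiteness, fun σ hσ f => ?_⟩
  have hp' : 1 / 2 ≤ 1 / p := one_div_le_one_div_of_le hp0 hp2
  have hq2 : 1 / q ≤ 1 / 2 := one_div_le_one_div_of_le two_pos h2q
  set C : ℝ≥0∞ := ⨆ s ∈ Ioi (0 : ℝ), ENNReal.ofReal s *
    (volume {ξ : EuclideanSpace ℝ (Fin n) | s ≤ ‖σ ξ‖}) ^ (1 / p - 1 / q) with hCdef
  have hC : ∀ s : ℝ, 0 < s → ENNReal.ofReal s *
      (volume {ξ : EuclideanSpace ℝ (Fin n) | s ≤ ‖σ ξ‖}) ^ (1 / p - 1 / q) ≤ C := fun s hs =>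
    le_iSup₂ (f := fun (s : ℝ) (_ : s ∈ Ioi (0 : ℝ)) => ENNReal.ofReal s *
      (volume {ξ : EuclideanSpace ℝ (Fin n) | s ≤ ‖σ ξ‖}) ^ (1 / p - 1 / q)) s hs
  by_cases hint : Integrable fun ξ => σ ξ * 𝓕 (⇑f) ξ
  swap
  · simp [fourierInv_eq_zero_of_not_integrable hint]
  rcases eq_or_ne (eLpNorm (⇑f) (ENNReal.ofReal p) volume) 0 with hf0 | hf0
  · rw [eLpNorm_eq_zero_iff f.continuous.aestronglyMeasurable (by simpa using hp0)] at hf0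
    have hz : (fun ξ => σ ξ * 𝓕 (⇑f) ξ) = 0 := by
      ext ξ
      rw [Real.fourier_congr_ae hf0, Real.fourier_eq]
      simp
    simp [fourierInv_eq_zero_of_ae_eq_zero (Filter.EventuallyEq.of_eq hz)]
  rcases eq_or_ne C ⊤ with hCtop | hCtop
  · rw [hCtop, ENNReal.mul_top (by simp), ENNReal.top_mul hf0]
    exact le_top
  rcases (sub_nonneg.2 (hq2.trans hp')).eq_or_lt with hθ | hθ
  · refine absurd (ENNReal.eq_top_of_forall_nnreal_le fun t => ?_) hCtop
    have := hC (t + 1) (by positivity)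
    rw [← hθ, ENNReal.rpow_zero, mul_one] at this
    refine le_trans ?_ this
    rw [← ENNReal.ofReal_coe_nnreal]
    exact ENNReal.ofReal_le_ofReal (by linarith)
  rcases eq_or_ne C 0 with hC0 | hC0
  · have hσ0 : σ =ᵐ[volume] 0 := ae_eq_zero_of_forall_meas_le_norm_eq_zero fun s hs => by
      have := hC s hs
      rw [hC0, le_zero_iff, mul_eq_zero, ENNReal.rpow_eq_zero_iff_of_pos hθ] at this
      exact this.resolve_left (by simpa using hs)
    have hz : (fun ξ => σ ξ * 𝓕 (⇑f) ξ) =ᵐ[volume] 0 := by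
      filter_upwards [hσ0] with ξ hξ
      simp [hξ]
    simp [fourierInv_eq_zero_of_ae_eq_zero hz]
  have hCr : 0 < C.toReal := ENNReal.toReal_pos hC0 hCtop
  rw [← ENNReal.ofReal_toReal hCtop] at hC
  rw [eLpNorm_fourierInv_eq _ hint,
    eLpNorm_eq_lintegral_rpow_enorm_toReal (by simpa using hq0) ENNReal.ofReal_ne_top,
    eLpNorm_eq_lintegral_rpow_enorm_toReal (by simpa using hp0) ENNReal.ofReal_ne_top,
    ENNReal.toReal_ofReal hp0.le, ENNReal.toReal_ofReal hq0.le]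
  refine (lintegral_enorm_fourier_rpow_le_of_forall h2q hqp.symm hint
    (M := K₁ * K₂ * C * (∫⁻ x, ‖f x‖ₑ ^ p) ^ (1 / p)) fun φ hφ hφ1 hφ2 => ?_).trans ?_
  swap
  · gcongr
    exact le_self_add
  set θ : ℝ := 1 / p - 1 / q with hθdef
  set a : ℝ := (1 / p - 1 / 2) / θ with ha
  set b : ℝ := (1 / 2 - 1 / q) / θ with hb
  have ha0 : 0 ≤ a := div_nonneg (by linarith) hθ.le
  have hb0 : 0 ≤ b := div_nonneg (by linarith) hθ.le
  have hab : a + b = 1 := by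
    rw [ha, hb, ← add_div, sub_add_sub_cancel]
    exact div_self hθ.ne'
  have h₁ := H₁ ha0 hθ (div_mul_cancel₀ _ hθ.ne') hCr hσ hC f.continuous.measurable f.integrable
    (f.memLp 2)
  have h₂ := H₂ hb0 hθ (by rw [hb, div_mul_cancel₀ _ hθ.ne', hinv]; ring) hCr hσ hC hφ hφ1 hφ2
  have hm₁ : AEMeasurable fun ξ => ‖σ ξ‖ₑ ^ a * ‖𝓕 (⇑f) ξ‖ₑ :=
    ((hσ.enorm.pow_const _).mul
      (continuous_fourier_of_integrable f.integrable).measurable.enorm).aemeasurable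
  have hm₂ : AEMeasurable fun ξ => ‖σ ξ‖ₑ ^ b * ‖𝓕 φ ξ‖ₑ :=
    ((hσ.enorm.pow_const _).mul
      (continuous_fourier_of_integrable hφ1).measurable.enorm).aemeasurable
  calc ∫⁻ ξ, ‖σ ξ * 𝓕 (⇑f) ξ‖ₑ * ‖𝓕 φ ξ‖ₑ
      = ∫⁻ ξ, (‖σ ξ‖ₑ ^ a * ‖𝓕 (⇑f) ξ‖ₑ) * (‖σ ξ‖ₑ ^ b * ‖𝓕 φ ξ‖ₑ) := by
        refine lintegral_congr fun ξ => ?_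
        rw [mul_mul_mul_comm, ← ENNReal.rpow_add_of_nonneg _ _ ha0 hb0, hab, ENNReal.rpow_one,
          enorm_mul, mul_assoc]
    _ ≤ _ := ENNReal.lintegral_mul_le_Lp_mul_Lq volume Real.HolderConjugate.two_two hm₁ hm₂
    _ ≤ _ := mul_le_mul' h₁ h₂
    _ = K₁ * K₂ * (ENNReal.ofReal C.toReal ^ a * ENNReal.ofReal C.toReal ^ b) *
          (∫⁻ x, ‖f x‖ₑ ^ p) ^ (1 / p) * (∫⁻ x, ‖φ x‖ₑ ^ q') ^ (1 / q') := by ring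
    _ = _ := by
        rw [← ENNReal.rpow_add_of_nonneg _ _ ha0 hb0, hab, ENNReal.rpow_one,
          ENNReal.ofReal_toReal hCtop]
end

section
/- Paley's inequality on ℝⁿ: Let 1 < p ≤ 2 and let φ : ℝⁿ → [0,∞) be measurable with M_φ := sup_{t>0} t · |{ξ ∈ ℝⁿ : φ(ξ) ≥ t}| < ∞. Then for all u ∈ L^p(ℝⁿ), ( ∫_{ℝⁿ} |û(ξ)|^p φ(ξ)^{2−p} dξ )^{1/p} ≲ M_φ^{(2−p)/p} ‖u‖_{L^p(ℝⁿ)}. -/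
open MeasureTheory Set SchwartzMap
open scoped ENNReal FourierTransform

section Paley

variable {V : Type*} [NormedAddCommGroup V] [InnerProductSpace ℝ V] [FiniteDimensional ℝ V]

/-- A smooth version of truncation at height `l`, staying inside the Schwartz space. -/
theorem SchwartzMap.exists_add_eq_truncation (u : 𝓢(V, ℂ)) {l : ℝ} (hl : 0 < l) :
    ∃ v w : 𝓢(V, ℂ), u = v + w ∧ (∀ x, ‖v x‖ ≤ if l ≤ ‖u x‖ then ‖u x‖ else 0) ∧
      ∀ x, ‖w x‖ ≤ if ‖u x‖ ≤ 2 * l then ‖u x‖ else 0 := by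
  set g : V → ℝ := fun x => Real.smoothTransition (‖u x‖ ^ 2 / l ^ 2 - 1) with hg
  have hgs : ContDiff ℝ (⊤ : ℕ∞) g := by
    refine Real.smoothTransition.contDiff.comp ?_
    exact (((u.smooth ⊤).norm_sq ℝ).div_const _).sub contDiff_const
  have hg0 : ∀ x, ‖u x‖ < l → g x = 0 := fun x hx => by
    apply Real.smoothTransition.zero_of_nonpos
    rw [sub_nonpos, div_le_one (by positivity)]
    gcongr
  have hg1 : ∀ x, 2 * l < ‖u x‖ → g x = 1 := fun x hx => by
    apply Real.smoothTransition.one_of_one_le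
    rw [le_sub_iff_add_le, le_div_iff₀ (by positivity)]
    nlinarith
  have hgn : ∀ x, 0 ≤ g x := fun x => Real.smoothTransition.nonneg _
  have hgle : ∀ x, g x ≤ 1 := fun x => Real.smoothTransition.le_one _
  have hcs : HasCompactSupport (fun x => g x • u x) := by
    have h0 := u.toZeroAtInfty.zero_at_infty'
    have h1 : ∀ᶠ x in Filter.cocompact V, ‖u x‖ < l := by
      have := h0.norm.eventually (gt_mem_nhds (by simpa using hl))
      simpa using this
    rw [hasCompactSupport_iff_eventuallyEq, Filter.coclosedCompact_eq_cocompact]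
    filter_upwards [h1] with x hx
    simp [hg0 x hx]
  let v : 𝓢(V, ℂ) := hcs.toSchwartzMap (hgs.smul (u.smooth ⊤))
  have hv : ∀ x, v x = g x • u x := fun x => rfl
  refine ⟨v, u - v, by simp, fun x => ?_, fun x => ?_⟩
  · rw [hv, norm_smul, Real.norm_of_nonneg (hgn x)]
    split_ifs with h
    · exact mul_le_of_le_one_left (norm_nonneg _) (hgle x)
    · simp [hg0 x (not_le.1 h)]
  · have : (u - v) x = (1 - g x) • u x := by
      rw [sub_apply, hv, sub_smul, one_smul]
    rw [this, norm_smul, Real.norm_of_nonneg (sub_nonneg.2 (hgle x))]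
    split_ifs with h
    · exact mul_le_of_le_one_left (norm_nonneg _) (by linarith [hgn x])
    · simp [hg1 x (not_le.1 h)]

theorem lintegral_Ioi_rpow_truncated_above_le {p a y : ℝ} (hp : 1 < p) (ha : 0 < a) (hy : 0 ≤ y) :
    ENNReal.ofReal y * ∫⁻ t in Ioi (0 : ℝ), (if a * t ≤ y then ENNReal.ofReal (t ^ (p - 2)) else 0) ≤
      ENNReal.ofReal (a ^ (1 - p) / (p - 1)) * ENNReal.ofReal (y ^ p) := by
  rcases hy.eq_or_lt with rfl | hy
  · simp
  have hya : 0 < y / a := by positivity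
  have hI : IntegrableOn (fun t : ℝ => t ^ (p - 2)) (Ioc 0 (y / a)) := by
    rw [← intervalIntegrable_iff_integrableOn_Ioc_of_le hya.le]
    exact intervalIntegral.intervalIntegrable_rpow' (by linarith)
  have h1 : ∫⁻ t in Ioi (0 : ℝ), (if a * t ≤ y then ENNReal.ofReal (t ^ (p - 2)) else 0) =
      ENNReal.ofReal ((y / a) ^ (p - 1) / (p - 1)) := by
    have : ∀ t : ℝ, (if a * t ≤ y then ENNReal.ofReal (t ^ (p - 2)) else 0) =
        (Iic (y / a)).indicator (fun t => ENNReal.ofReal (t ^ (p - 2))) t := fun t => by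
      simp only [indicator, mem_Iic, le_div_iff₀' ha]
    simp_rw [this]
    rw [setLIntegral_indicator measurableSet_Iic, inter_comm, Ioi_inter_Iic,
      ← ofReal_integral_eq_lintegral_ofReal hI]
    · rw [← intervalIntegral.integral_of_le hya.le, integral_rpow (Or.inl (by linarith)),
        show p - 2 + 1 = p - 1 by ring, Real.zero_rpow (by linarith), sub_zero]
    · filter_upwards [self_mem_ae_restrict measurableSet_Ioc] with t ht
      exact Real.rpow_nonneg ht.1.le _
  rw [h1, ← ENNReal.ofReal_mul hy.le, ← ENNReal.ofReal_mul (by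
    have : 0 < p - 1 := by linarith
    positivity)]
  apply ENNReal.ofReal_le_ofReal (le_of_eq _)
  rw [Real.div_rpow hy.le ha.le, show 1 - p = -(p - 1) by ring, Real.rpow_neg ha.le,
    show p = 1 + (p - 1) by ring, Real.rpow_add hy, Real.rpow_one]
  simp only [add_sub_cancel_left]
  field_simp

theorem lintegral_Ioi_rpow_truncated_below_le {p a y : ℝ} (hp2 : p < 2) (ha : 0 < a)
    (hy : 0 ≤ y) :
    ENNReal.ofReal (y ^ 2) *
        ∫⁻ t in Ioi (0 : ℝ), (if y ≤ 2 * (a * t) then ENNReal.ofReal (t ^ (p - 3)) else 0) ≤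
      ENNReal.ofReal ((2 * a) ^ (2 - p) / (2 - p)) * ENNReal.ofReal (y ^ p) := by
  rcases hy.eq_or_lt with rfl | hy
  · simp
  have ha2 : 0 < 2 * a := by positivity
  have hya : 0 < y / (2 * a) := by positivity
  have hI : IntegrableOn (fun t : ℝ => t ^ (p - 3)) (Ioi (y / (2 * a))) :=
    integrableOn_Ioi_rpow_of_lt (by linarith) hya
  have h1 : ∫⁻ t in Ioi (0 : ℝ), (if y ≤ 2 * (a * t) then ENNReal.ofReal (t ^ (p - 3)) else 0) =
      ENNReal.ofReal ((y / (2 * a)) ^ (p - 2) / (2 - p)) := by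
    have : ∀ t : ℝ, (if y ≤ 2 * (a * t) then ENNReal.ofReal (t ^ (p - 3)) else 0) =
        (Ici (y / (2 * a))).indicator (fun t => ENNReal.ofReal (t ^ (p - 3))) t := fun t => by
      simp only [indicator, mem_Ici, div_le_iff₀' ha2, mul_assoc]
    simp_rw [this]
    rw [setLIntegral_indicator measurableSet_Ici,
      inter_eq_left.2 (Ici_subset_Ioi.2 hya), ← setLIntegral_congr Ioi_ae_eq_Ici,
      ← ofReal_integral_eq_lintegral_ofReal hI]
    · rw [integral_Ioi_rpow_of_lt (by linarith) hya, show p - 3 + 1 = -(2 - p) by ring,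
        neg_div_neg_eq, neg_sub]
    · filter_upwards [self_mem_ae_restrict measurableSet_Ioi] with t ht
      exact Real.rpow_nonneg (hya.trans ht).le _
  have h2 : 0 < 2 - p := by linarith
  have hyp : y ^ p = y ^ 2 / y ^ (2 - p) := by
    rw [← Real.rpow_two, ← Real.rpow_sub hy, sub_sub_cancel]
  rw [h1, ← ENNReal.ofReal_mul (by positivity), ← ENNReal.ofReal_mul (by positivity)]
  apply ENNReal.ofReal_le_ofReal (le_of_eq _)
  rw [Real.div_rpow hy.le ha2.le, show p - 2 = -(2 - p) by ring, Real.rpow_neg ha2.le,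
    Real.rpow_neg hy.le, hyp]
  field_simp

theorem setLIntegral_sq_le_of_weak_type {α : Type*} [MeasurableSpace α] {μ : Measure α}
    {φ : α → ℝ} (hφ : Measurable φ) {M : ℝ≥0∞}
    (hM : ∀ t : ℝ, 0 < t → ENNReal.ofReal t * μ {x | t ≤ φ x} ≤ M) (s : ℝ) :
    ∫⁻ x in {x | 0 < φ x ∧ φ x ≤ s}, ENNReal.ofReal (φ x ^ 2) ∂μ ≤ 2 * ENNReal.ofReal s * M := by
  set S := {x | 0 < φ x ∧ φ x ≤ s} with hS
  have hSm : MeasurableSet S :=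
    (measurableSet_lt measurable_const hφ).inter (measurableSet_le hφ measurable_const)
  have h := lintegral_rpow_eq_lintegral_meas_le_mul (μ.restrict S) (f := φ)
    (by filter_upwards [self_mem_ae_restrict hSm] with x hx using hx.1.le) hφ.aemeasurable
    (p := 2) two_pos
  simp only [Real.rpow_two] at h
  rw [h, ENNReal.ofReal_ofNat, mul_assoc]
  gcongr
  calc _ ≤ ∫⁻ t in Ioi (0 : ℝ), (Iic s).indicator (fun _ => M) t := by
        refine setLIntegral_mono' measurableSet_Ioi fun t ht => ?_
        rw [mem_Ioi] at ht
        rw [show (2 : ℝ) - 1 = 1 by norm_num, Real.rpow_one]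
        by_cases hts : t ≤ s
        · rw [indicator_of_mem (by exact hts), mul_comm]
          exact (mul_le_mul_right (Measure.restrict_apply_le _ _) _).trans (hM t ht)
        · have : (μ.restrict S) {a | t ≤ φ a} = 0 := by
            rw [Measure.restrict_apply (measurableSet_le measurable_const hφ)]
            convert measure_empty (μ := μ)
            ext x
            simp only [hS, mem_inter_iff, mem_ofPred_eq, mem_empty_iff_false, iff_false]
            intro hx
            linarith [hx.1, hx.2.2]
          simp [this]
    _ = _ := by
        rw [setLIntegral_indicator measurableSet_Iic, inter_comm, Ioi_inter_Iic]
        simp [mul_comm]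

variable [MeasurableSpace V] [BorelSpace V]

theorem SchwartzMap.lintegral_norm_sq_fourier (f : 𝓢(V, ℂ)) :
    ∫⁻ ξ, ENNReal.ofReal (‖𝓕 f ξ‖ ^ 2) = ∫⁻ x, ENNReal.ofReal (‖f x‖ ^ 2) := by
  have h : ∀ g : 𝓢(V, ℂ), Integrable (fun x => ‖g x‖ ^ 2) := fun g =>
    (memLp_two_iff_integrable_sq_norm (g.memLp 2).1).1 (g.memLp 2)
  rw [← ofReal_integral_eq_lintegral_ofReal (h _) (.of_forall fun x => by positivity),
    ← ofReal_integral_eq_lintegral_ofReal (h _) (.of_forall fun x => by positivity),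
    integral_norm_sq_fourier]

/-- The weak-type estimate for `u ↦ û / φ` with respect to the measure `φ² dξ`. -/
theorem SchwartzMap.withDensity_fourier_div_gt_le {φ : V → ℝ} (hφ : Measurable φ)
    (h0 : ∀ ξ, 0 ≤ φ ξ) {m : ℝ} (hm : 0 ≤ m)
    (hM : ∀ t : ℝ, 0 < t → ENNReal.ofReal t * volume {ξ | t ≤ φ ξ} ≤ ENNReal.ofReal m)
    (u : 𝓢(V, ℂ)) {a t : ℝ} (ha : 0 < a) (ht : 0 < t) :
    (volume.withDensity fun ξ => ENNReal.ofReal (φ ξ ^ 2)) {ξ | t < ‖𝓕 u ξ‖ / φ ξ} ≤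
      ENNReal.ofReal (4 * m / t) *
          (∫⁻ x, if a * t ≤ ‖u x‖ then ENNReal.ofReal ‖u x‖ else 0) +
        ENNReal.ofReal (4 / t ^ 2) *
          (∫⁻ x, if ‖u x‖ ≤ 2 * (a * t) then ENNReal.ofReal (‖u x‖ ^ 2) else 0) := by
  obtain ⟨v, w, huvw, hv, hw⟩ := u.exists_add_eq_truncation (mul_pos ha ht)
  have hvi : ∫⁻ x, ENNReal.ofReal ‖v x‖ ≤
      ∫⁻ x, if a * t ≤ ‖u x‖ then ENNReal.ofReal ‖u x‖ else 0 := by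
    refine lintegral_mono fun x => (ENNReal.ofReal_le_ofReal (hv x)).trans_eq ?_
    split_ifs <;> simp
  have hwi : ∫⁻ x, ENNReal.ofReal (‖w x‖ ^ 2) ≤
      ∫⁻ x, if ‖u x‖ ≤ 2 * (a * t) then ENNReal.ofReal (‖u x‖ ^ 2) else 0 := by
    refine lintegral_mono fun x => (ENNReal.ofReal_le_ofReal
      (pow_le_pow_left₀ (norm_nonneg _) (hw x) 2)).trans_eq ?_
    split_ifs <;> simp
  set A : ℝ := ∫ x, ‖v x‖ with hA
  have hA0 : 0 ≤ A := integral_nonneg fun _ => norm_nonneg _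
  have hAl : ENNReal.ofReal A = ∫⁻ x, ENNReal.ofReal ‖v x‖ :=
    ofReal_integral_eq_lintegral_ofReal v.integrable.norm (.of_forall fun x => norm_nonneg _)
  set S : Set V := {ξ | 0 < φ ξ ∧ φ ξ ≤ 2 * A / t} with hS
  set T : Set V := {ξ | t / 2 * φ ξ ≤ ‖𝓕 w ξ‖} with hT
  have hTm : MeasurableSet T :=
    measurableSet_le (hφ.const_mul _) (𝓕 w).continuous.norm.measurable
  have hSm : MeasurableSet S :=
    (measurableSet_lt measurable_const hφ).inter (measurableSet_le hφ measurable_const)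
  have hsub : {ξ | t < ‖𝓕 u ξ‖ / φ ξ} ⊆ S ∪ T := by
    intro ξ hξ
    rw [mem_ofPred_eq] at hξ
    have hpos : 0 < φ ξ := by
      rcases (h0 ξ).eq_or_lt with h | h
      · rw [← h, div_zero] at hξ
        linarith
      · exact h
    rw [lt_div_iff₀ hpos] at hξ
    by_cases hξT : ξ ∈ T
    · exact Or.inr hξT
    left
    refine ⟨hpos, ?_⟩
    rw [hT, mem_ofPred_eq, not_le] at hξT
    have h1 : ‖𝓕 u ξ‖ ≤ ‖𝓕 v ξ‖ + ‖𝓕 w ξ‖ := by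
      rw [huvw, FourierTransform.fourier_add, add_apply]
      exact norm_add_le _ _
    have h2 : ‖𝓕 v ξ‖ ≤ A := by
      rw [hA, ← norm_toLp_one]
      exact norm_fourier_apply_le_toLp_one v ξ
    rw [le_div_iff₀ ht]
    linarith
  refine (measure_mono hsub).trans ((measure_union_le _ _).trans (add_le_add ?_ ?_))
  · rw [withDensity_apply _ hSm]
    refine (setLIntegral_sq_le_of_weak_type hφ hM _).trans ?_
    refine le_trans (le_of_eq ?_) (mul_le_mul_right hvi _)
    rw [← hAl, ← ENNReal.ofReal_ofNat, ← ENNReal.ofReal_mul (by positivity),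
      ← ENNReal.ofReal_mul (by positivity), ← ENNReal.ofReal_mul (by positivity)]
    congr 1
    ring
  · rw [withDensity_apply _ hTm]
    refine le_trans ?_ (mul_le_mul_right hwi _)
    rw [← w.lintegral_norm_sq_fourier, ← lintegral_const_mul' _ _ ENNReal.ofReal_ne_top]
    refine le_trans ?_ (setLIntegral_le_lintegral T _)
    refine setLIntegral_mono' hTm fun ξ hξ => ?_
    rw [← ENNReal.ofReal_mul (by positivity)]
    apply ENNReal.ofReal_le_ofReal
    rw [hT, mem_ofPred_eq] at hξ
    have h3 := pow_le_pow_left₀ (mul_nonneg (by positivity) (h0 ξ)) hξ 2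
    rw [div_mul_eq_mul_div, le_div_iff₀ (by positivity)]
    nlinarith

theorem SchwartzMap.lintegral_fourier_div_rpow_le {p : ℝ} (hp : 1 < p) (hp2 : p < 2) {φ : V → ℝ}
    (hφ : Measurable φ) (h0 : ∀ ξ, 0 ≤ φ ξ) {m : ℝ} (hm : 0 < m)
    (hM : ∀ t : ℝ, 0 < t → ENNReal.ofReal t * volume {ξ | t ≤ φ ξ} ≤ ENNReal.ofReal m)
    (u : 𝓢(V, ℂ)) :
    ∫⁻ ξ, ENNReal.ofReal ((‖𝓕 u ξ‖ / φ ξ) ^ p)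
        ∂(volume.withDensity fun ξ => ENNReal.ofReal (φ ξ ^ 2)) ≤
      ENNReal.ofReal (p * (4 / (p - 1) + 4 * 2 ^ (2 - p) / (2 - p))) *
        ENNReal.ofReal (m ^ (2 - p)) * ∫⁻ x, ENNReal.ofReal (‖u x‖ ^ p) := by
  have hp1 : 0 < p - 1 := by linarith
  have hp3 : 0 < 2 - p := by linarith
  have hun : Measurable fun x => ‖u x‖ := u.continuous.norm.measurable
  set I := ∫⁻ x, ENNReal.ofReal (‖u x‖ ^ p) with hI
  have hF1 : Measurable fun z : ℝ × V => if m * z.1 ≤ ‖u z.2‖ then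
      ENNReal.ofReal (z.1 ^ (p - 2)) * ENNReal.ofReal ‖u z.2‖ else 0 := by
    refine Measurable.ite (measurableSet_le (by fun_prop) (hun.comp measurable_snd)) ?_
      measurable_const
    exact (by fun_prop : Measurable fun z : ℝ × V => ENNReal.ofReal (z.1 ^ (p - 2))).mul
      (hun.comp measurable_snd).ennreal_ofReal
  have hF2 : Measurable fun z : ℝ × V => if ‖u z.2‖ ≤ 2 * (m * z.1) then
      ENNReal.ofReal (z.1 ^ (p - 3)) * ENNReal.ofReal (‖u z.2‖ ^ 2) else 0 := by
    refine Measurable.ite (measurableSet_le (hun.comp measurable_snd) (by fun_prop)) ?_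
      measurable_const
    exact (by fun_prop : Measurable fun z : ℝ × V => ENNReal.ofReal (z.1 ^ (p - 3))).mul
      ((hun.comp measurable_snd).pow_const 2).ennreal_ofReal
  have hB1 : ∫⁻ t in Ioi (0 : ℝ), ∫⁻ x, (if m * t ≤ ‖u x‖ then
      ENNReal.ofReal (t ^ (p - 2)) * ENNReal.ofReal ‖u x‖ else 0) ≤
      ENNReal.ofReal (m ^ (1 - p) / (p - 1)) * I := by
    rw [lintegral_lintegral_swap hF1.aemeasurable, hI,
      ← lintegral_const_mul' _ _ ENNReal.ofReal_ne_top]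
    refine lintegral_mono fun x => le_trans (le_of_eq ?_)
      (lintegral_Ioi_rpow_truncated_above_le hp hm (norm_nonneg (u x)))
    rw [← lintegral_const_mul' _ _ ENNReal.ofReal_ne_top]
    refine lintegral_congr fun t => ?_
    split_ifs <;> simp [mul_comm]
  have hB2 : ∫⁻ t in Ioi (0 : ℝ), ∫⁻ x, (if ‖u x‖ ≤ 2 * (m * t) then
      ENNReal.ofReal (t ^ (p - 3)) * ENNReal.ofReal (‖u x‖ ^ 2) else 0) ≤
      ENNReal.ofReal ((2 * m) ^ (2 - p) / (2 - p)) * I := by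
    rw [lintegral_lintegral_swap hF2.aemeasurable, hI,
      ← lintegral_const_mul' _ _ ENNReal.ofReal_ne_top]
    refine lintegral_mono fun x => le_trans (le_of_eq ?_)
      (lintegral_Ioi_rpow_truncated_below_le hp2 hm (norm_nonneg (u x)))
    rw [← lintegral_const_mul' _ _ ENNReal.ofReal_ne_top]
    refine lintegral_congr fun t => ?_
    split_ifs <;> simp [mul_comm]
  rw [lintegral_rpow_eq_lintegral_meas_lt_mul _
    (.of_forall fun ξ => div_nonneg (norm_nonneg _) (h0 ξ))
    ((𝓕 u).continuous.norm.measurable.div hφ).aemeasurable (by linarith)]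
  have hstep : ∫⁻ t in Ioi (0 : ℝ), (volume.withDensity fun ξ => ENNReal.ofReal (φ ξ ^ 2))
        {ξ | t < ‖𝓕 u ξ‖ / φ ξ} * ENNReal.ofReal (t ^ (p - 1)) ≤
      ENNReal.ofReal (4 * m) * (ENNReal.ofReal (m ^ (1 - p) / (p - 1)) * I) +
        ENNReal.ofReal 4 * (ENNReal.ofReal ((2 * m) ^ (2 - p) / (2 - p)) * I) := by
    refine le_trans ?_ (add_le_add (mul_le_mul_right hB1 _) (mul_le_mul_right hB2 _))
    rw [← lintegral_const_mul' _ _ ENNReal.ofReal_ne_top,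
      ← lintegral_const_mul' _ _ ENNReal.ofReal_ne_top, ← lintegral_add_left]
    · refine setLIntegral_mono' measurableSet_Ioi fun t (ht : 0 < t) => ?_
      refine (mul_le_mul_left (withDensity_fourier_div_gt_le hφ h0 hm.le hM u hm ht) _).trans_eq ?_
      have e1 : ENNReal.ofReal (4 * m / t) * ENNReal.ofReal (t ^ (p - 1)) =
          ENNReal.ofReal (4 * m) * ENNReal.ofReal (t ^ (p - 2)) := by
        rw [← ENNReal.ofReal_mul (by positivity), ← ENNReal.ofReal_mul (by positivity),
          show p - 1 = (p - 2) + 1 by ring, Real.rpow_add ht, Real.rpow_one]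
        congr 1
        field_simp
      have e2 : ENNReal.ofReal (4 / t ^ 2) * ENNReal.ofReal (t ^ (p - 1)) =
          ENNReal.ofReal 4 * ENNReal.ofReal (t ^ (p - 3)) := by
        rw [← ENNReal.ofReal_mul (by positivity), ← ENNReal.ofReal_mul (by positivity),
          show p - 1 = (p - 3) + 2 by ring, Real.rpow_add ht, Real.rpow_two]
        congr 1
        field_simp
      rw [add_mul, mul_right_comm, e1, mul_right_comm (ENNReal.ofReal (4 / t ^ 2)), e2,
        mul_assoc, mul_assoc,
        ← lintegral_const_mul' (ENNReal.ofReal (t ^ (p - 2))) _ ENNReal.ofReal_ne_top,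
        ← lintegral_const_mul' (ENNReal.ofReal (t ^ (p - 3))) _ ENNReal.ofReal_ne_top]
      simp only [mul_ite, mul_zero]
    · exact (Measurable.lintegral_prod_right' hF1).const_mul _
  refine (mul_le_mul_right hstep _).trans_eq ?_
  rw [← mul_assoc, ← mul_assoc, ← add_mul, ← mul_assoc]
  congr 1
  rw [← ENNReal.ofReal_mul (by positivity), ← ENNReal.ofReal_mul (by positivity),
    ← ENNReal.ofReal_add (by positivity) (by positivity), ← ENNReal.ofReal_mul (by positivity),
    ← ENNReal.ofReal_mul (by positivity)]
  congr 1
  rw [Real.mul_rpow two_pos.le hm.le, show 2 - p = 1 + (1 - p) by ring, Real.rpow_add hm,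
    Real.rpow_one]
  ring

/-- **Paley's inequality** for Schwartz functions, in the form without roots. -/
theorem SchwartzMap.exists_lintegral_fourier_rpow_mul_le (V : Type*) [NormedAddCommGroup V]
    [InnerProductSpace ℝ V] [FiniteDimensional ℝ V] [MeasurableSpace V] [BorelSpace V]
    {p : ℝ} (hp : 1 < p) (hp2 : p ≤ 2) :
    ∃ C : ℝ≥0∞, 0 < C ∧ C ≠ ⊤ ∧ ∀ φ : V → ℝ, Measurable φ → (∀ ξ, 0 ≤ φ ξ) →
      ∀ M : ℝ≥0∞, M ≠ ⊤ →
        (∀ t : ℝ, 0 < t → ENNReal.ofReal t * volume {ξ | t ≤ φ ξ} ≤ M) →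
        ∀ u : 𝓢(V, ℂ), ∫⁻ ξ, ENNReal.ofReal ‖𝓕 u ξ‖ ^ p * ENNReal.ofReal (φ ξ) ^ (2 - p) ≤
          C * M ^ (2 - p) * ∫⁻ x, ENNReal.ofReal ‖u x‖ ^ p := by
  rcases hp2.eq_or_lt with rfl | hp2
  · refine ⟨1, one_pos, ENNReal.one_ne_top, fun φ _ _ M _ _ u => le_of_eq ?_⟩
    have := u.lintegral_norm_sq_fourier
    simpa [ENNReal.ofReal_pow] using this
  have hp1 : 0 < p - 1 := by linarith
  have hp3 : 0 < 2 - p := by linarith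
  refine ⟨ENNReal.ofReal (p * (4 / (p - 1) + 4 * 2 ^ (2 - p) / (2 - p))),
    ENNReal.ofReal_pos.2 (by positivity), ENNReal.ofReal_ne_top, fun φ hφ h0 M hMt hM u => ?_⟩
  rcases eq_or_ne M 0 with rfl | hM0
  · have hae : ∀ᵐ ξ, φ ξ = 0 := by
      have hk : ∀ k : ℕ, ∀ᵐ ξ, φ ξ < 1 / ((k : ℝ) + 1) := fun k => by
        have hkp : (0 : ℝ) < 1 / ((k : ℝ) + 1) := by positivity
        have h := hM _ hkp
        rw [nonpos_iff_eq_zero, mul_eq_zero, or_iff_right (ENNReal.ofReal_pos.2 hkp).ne'] at h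
        rw [ae_iff]
        simpa only [not_lt] using h
      filter_upwards [ae_all_iff.2 hk] with ξ hξ
      refine le_antisymm (le_of_forall_pos_lt_add fun ε hε => ?_) (h0 ξ)
      obtain ⟨k, hk⟩ := exists_nat_one_div_lt hε
      linarith [hξ k]
    refine le_of_eq_of_le ?_ zero_le
    rw [← lintegral_zero (μ := (volume : Measure V))]
    refine lintegral_congr_ae ?_
    filter_upwards [hae] with ξ hξ
    simp [hξ, hp3]
  have hm : 0 < M.toReal := ENNReal.toReal_pos hM0 hMt
  have key := u.lintegral_fourier_div_rpow_le hp hp2 hφ h0 hm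
    (by simpa only [ENNReal.ofReal_toReal hMt] using hM)
  rw [← ENNReal.ofReal_rpow_of_pos hm, ENNReal.ofReal_toReal hMt,
    lintegral_withDensity_eq_lintegral_mul _ (by fun_prop)
      (((𝓕 u).continuous.norm.measurable.div hφ).pow_const p).ennreal_ofReal] at key
  simp only [ENNReal.ofReal_rpow_of_nonneg (norm_nonneg _) (zero_le_one.trans hp.le)] at key ⊢
  refine le_of_eq_of_le (lintegral_congr fun ξ => ?_) key
  rw [ENNReal.ofReal_rpow_of_nonneg (h0 ξ) hp3.le, Pi.mul_apply,
    ← ENNReal.ofReal_mul (by positivity), ← ENNReal.ofReal_mul (by positivity)]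
  congr 1
  rcases (h0 ξ).eq_or_lt with h | h
  · simp [← h, hp3.ne']
  · rw [Real.div_rpow (norm_nonneg _) h.le, Real.rpow_sub h, Real.rpow_two]
    field_simp

end Paley

/-- Paley's inequality on `ℝⁿ`: for `1 < p ≤ 2` there is a constant `K` (depending only
on `p` and `n`) such that for every measurable `φ ≥ 0` with
`M_φ = sup_{t>0} t |{ξ : φ ξ ≥ t}| < ∞` and every `u`,
`(∫ |û(ξ)|^p φ(ξ)^{2-p} dξ)^{1/p} ≤ K · M_φ^{(2-p)/p} ‖u‖_{L^p}`. -/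
theorem stmt_8 (n : ℕ) (p : ℝ) (hp : 1 < p) (hp2 : p ≤ 2) :
    ∃ K : ℝ≥0∞, 0 < K ∧ K ≠ ⊤ ∧
      ∀ φ : EuclideanSpace ℝ (Fin n) → ℝ, Measurable φ → (∀ ξ, 0 ≤ φ ξ) →
        ∀ Mφ : ℝ≥0∞, Mφ ≠ ⊤ →
          (∀ t : ℝ, 0 < t →
            ENNReal.ofReal t * volume {ξ : EuclideanSpace ℝ (Fin n) | t ≤ φ ξ} ≤ Mφ) →
          ∀ u : 𝓢(EuclideanSpace ℝ (Fin n), ℂ),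
            (∫⁻ ξ, (‖𝓕 (⇑u) ξ‖₊ : ℝ≥0∞) ^ p * ENNReal.ofReal (φ ξ) ^ (2 - p)) ^ (1/p) ≤
              K * Mφ ^ ((2 - p)/p) * eLpNorm (⇑u) (ENNReal.ofReal p) volume := by
  obtain ⟨C, hC0, hCt, hC⟩ :=
    SchwartzMap.exists_lintegral_fourier_rpow_mul_le (EuclideanSpace ℝ (Fin n)) hp hp2
  have hp0 : 0 < p := by linarith
  refine ⟨C ^ (1 / p), ENNReal.rpow_pos hC0 hCt, ENNReal.rpow_ne_top_of_nonneg (by positivity) hCt,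
    fun φ hφ h0 M hMt hM u => ?_⟩
  have h := ENNReal.rpow_le_rpow (hC φ hφ h0 M hMt hM u) (one_div_pos.2 hp0).le
  rw [ENNReal.mul_rpow_of_nonneg _ _ (by positivity), ENNReal.mul_rpow_of_nonneg _ _ (by positivity),
    ← ENNReal.rpow_mul, mul_one_div] at h
  rw [eLpNorm_eq_lintegral_rpow_enorm_toReal (ENNReal.ofReal_pos.2 hp0).ne' ENNReal.ofReal_ne_top,
    ENNReal.toReal_ofReal hp0.le]
  simpa only [ofReal_norm, enorm_eq_nnnorm, SchwartzMap.fourier_coe] using h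
end
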